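/- Let X be a Tychonoff topological space. Then C_k(X) is productively countably tight if and only if X is strongly Alster. -/

import Mathlib

open Set Topology

universe u

/-- A bornology on `X`: a collection of subsets covering `X`, closed under
taking subsets and under finite unions. -/
structure IsBornology {X : Type*} (𝔅 : Set (Set X)) : Prop where
  covers : ⋃₀ 𝔅 = Set.univ
  empty_mem : ∅ ∈ 𝔅
  subset_mem : ∀ ⦃A B : Set X⦄, B ∈ 𝔅 → A ⊆ B → A ∈ 𝔅
  union_mem : ∀ ⦃A B : Set X⦄, A ∈ 𝔅 → B ∈ 𝔅 → A ∪ B ∈ 𝔅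

/-- `𝔅` has a compact base: every member of `𝔅` is contained in a compact member of `𝔅`. -/
def HasCompactBase {X : Type*} [TopologicalSpace X] (𝔅 : Set (Set X)) : Prop :=
  ∀ B ∈ 𝔅, ∃ K ∈ 𝔅, IsCompact K ∧ B ⊆ K

/-- The set of continuous real-valued functions on `X` (as a bare type, to be
topologized by a bornology). -/
def CFn (X : Type u) [TopologicalSpace X] : Type u := {f : X → ℝ // Continuous f}

/-- The zero function as an element of `CFn X`. -/
def zeroFn (X : Type u) [TopologicalSpace X] : CFn X := ⟨fun _ => 0, continuous_const⟩

/-- The basic "ball" `⟨B, ε⟩[f] = {g : ∀ x ∈ B, |f x − g x| < ε}`. -/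
def unifBall {X : Type u} [TopologicalSpace X] (f : CFn X) (B : Set X) (ε : ℝ) :
    Set (CFn X) :=
  {g | ∀ x ∈ B, |f.1 x - g.1 x| < ε}

/-- The topology of uniform convergence on members of a bornology `𝔅`:
a set is open iff around each of its points it contains a basic ball
`⟨B, ε⟩[f]` with `B ∈ 𝔅`, `ε > 0`.  This makes `CFn X` into `C_𝔅(X)`. -/
def bornTopology {X : Type u} [TopologicalSpace X] (𝔅 : Set (Set X))
    (hB : IsBornology 𝔅) : TopologicalSpace (CFn X) where
  IsOpen U := ∀ f ∈ U, ∃ B ∈ 𝔅, ∃ ε > (0 : ℝ), unifBall f B ε ⊆ U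
  isOpen_univ := fun f _ => ⟨∅, hB.empty_mem, 1, one_pos, fun _ _ => trivial⟩
  isOpen_inter := by
    intro U V hU hV f hf
    obtain ⟨B₁, hB₁, ε₁, hε₁, h₁⟩ := hU f hf.1
    obtain ⟨B₂, hB₂, ε₂, hε₂, h₂⟩ := hV f hf.2
    refine ⟨B₁ ∪ B₂, hB.union_mem hB₁ hB₂, min ε₁ ε₂, lt_min hε₁ hε₂, fun g hg => ⟨?_, ?_⟩⟩
    · exact h₁ fun x hx => lt_of_lt_of_le (hg x (Or.inl hx)) (min_le_left _ _)
    · exact h₂ fun x hx => lt_of_lt_of_le (hg x (Or.inr hx)) (min_le_right _ _)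
  isOpen_sUnion := by
    intro S hS f hf
    obtain ⟨U, hU, hfU⟩ := hf
    obtain ⟨B, hB', ε, hε, h⟩ := hS U hU f hfU
    exact ⟨B, hB', ε, hε, h.trans (Set.subset_sUnion_of_mem hU)⟩

/-- `Ω_z`: the family of all subsets of `Z ∖ {z}` having `z` in their closure. -/
def OmegaAt {Z : Type*} [TopologicalSpace Z] (z : Z) : Set (Set Z) :=
  {A | A ⊆ {z}ᶜ ∧ z ∈ closure A}

/-- `𝒢` is a `𝔅`-cover of `X`: every member of `𝔅` is contained in a member of `𝒢`. -/
def IsBCover {X : Type*} (𝔅 : Set (Set X)) (𝒢 : Set (Set X)) : Prop :=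
  ∀ B ∈ 𝔅, ∃ G ∈ 𝒢, B ⊆ G

/-- `𝒪_𝔅`: the family of all open `𝔅`-covers of `X`. -/
def OpenBCovers {X : Type*} [TopologicalSpace X] (𝔅 : Set (Set X)) : Set (Set (Set X)) :=
  {𝒰 | (∀ U ∈ 𝒰, IsOpen U) ∧ IsBCover 𝔅 𝒰}

/-- `𝒢` is a K-cover of `X`: every compact subset of `X` is contained in a member of `𝒢`. -/
def IsKCover {X : Type*} [TopologicalSpace X] (𝒢 : Set (Set X)) : Prop :=
  ∀ K : Set X, IsCompact K → ∃ G ∈ 𝒢, K ⊆ G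

/-- `𝒦`: the family of all open K-covers of `X`. -/
def KCovers (X : Type*) [TopologicalSpace X] : Set (Set (Set X)) :=
  {𝒰 | (∀ U ∈ 𝒰, IsOpen U) ∧ IsKCover 𝒰}

/-- Player II has a winning strategy in the game `G₁(𝒜, 𝒞)` (of length `ω`):
a function assigning to each finite sequence `(A₀, …, Aₙ)` of moves of player I an
element of `Aₙ`, such that in any play following it the chosen points form a member of `𝒞`. -/
def G1WinII {T : Type*} (𝒜 𝒞 : Set (Set T)) : Prop :=
  ∃ σ : (n : ℕ) → (Fin (n + 1) → Set T) → T,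
    (∀ (n : ℕ) (h : Fin (n + 1) → Set T), (∀ i, h i ∈ 𝒜) → σ n h ∈ h (Fin.last n)) ∧
    ∀ A : ℕ → Set T, (∀ n, A n ∈ 𝒜) →
      (Set.range fun n => σ n fun i => A i.1) ∈ 𝒞

/-- Player II has a winning strategy in the transfinite game `G₁^α(𝒜, 𝒞)` of length `α`. -/
def G1WinIIOrd {T : Type*} (α : Ordinal.{0}) (𝒜 𝒞 : Set (Set T)) : Prop :=
  ∃ σ : (γ : {γ : Ordinal.{0} // γ < α}) → ({δ : Ordinal.{0} // δ ≤ γ.1} → Set T) → T,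
    (∀ (γ : {γ : Ordinal.{0} // γ < α}) (h : {δ : Ordinal.{0} // δ ≤ γ.1} → Set T),
      (∀ δ, h δ ∈ 𝒜) → σ γ h ∈ h ⟨γ.1, le_rfl⟩) ∧
    ∀ A : {γ : Ordinal.{0} // γ < α} → Set T, (∀ γ, A γ ∈ 𝒜) →
      (Set.range fun γ : {γ : Ordinal.{0} // γ < α} =>
        σ γ fun δ => A ⟨δ.1, lt_of_le_of_lt δ.2 γ.2⟩) ∈ 𝒞

/-- The selection principle `S₁(𝒜, 𝒞)`. -/
def S1 {T : Type*} (𝒜 𝒞 : Set (Set T)) : Prop :=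
  ∀ A : ℕ → Set T, (∀ n, A n ∈ 𝒜) →
    ∃ a : ℕ → T, (∀ n, a n ∈ A n) ∧ Set.range a ∈ 𝒞

/-- `Z` has countable tightness. -/
def CountablyTight (Z : Type*) [TopologicalSpace Z] : Prop :=
  ∀ (z : Z) (A : Set Z), z ∈ closure A → ∃ B ⊆ A, B.Countable ∧ z ∈ closure B

/-- `Z` is productively countably tight: `Z × Y` has countable tightness
for every countably tight space `Y`. -/
def ProductivelyCountablyTight (Z : Type u) [TopologicalSpace Z] : Prop :=
  ∀ (Y : Type u) [TopologicalSpace Y], CountablyTight Y → CountablyTight (Z × Y)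

/-- `Z` has tightness at most `κ`. -/
def TightnessLE (Z : Type u) [TopologicalSpace Z] (κ : Cardinal.{u}) : Prop :=
  ∀ (z : Z) (A : Set Z), z ∈ closure A → ∃ B ⊆ A, Cardinal.mk B ≤ κ ∧ z ∈ closure B

/-- `κ ∈ Sp(Z)`: for every space `Y` of tightness at most `κ`, the product `Z × Y`
has tightness at most `κ`. -/
def MemSp (Z : Type u) [TopologicalSpace Z] (κ : Cardinal.{u}) : Prop :=
  ∀ (Y : Type u) [TopologicalSpace Y], TightnessLE Y κ → TightnessLE (Z × Y) κ

/-- `G` is a `G_κ`-set: an intersection of at most `κ` open sets. -/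
def IsGKappaSet {X : Type u} [TopologicalSpace X] (κ : Cardinal.{u}) (G : Set X) : Prop :=
  ∃ 𝒪 : Set (Set X), (∀ O ∈ 𝒪, IsOpen O) ∧ Cardinal.mk 𝒪 ≤ κ ∧ G = ⋂₀ 𝒪

/-- `G` is a `G_δ`-set: an intersection of countably many open sets. -/
def IsGDeltaSet {X : Type*} [TopologicalSpace X] (G : Set X) : Prop :=
  ∃ 𝒪 : Set (Set X), (∀ O ∈ 𝒪, IsOpen O) ∧ 𝒪.Countable ∧ G = ⋂₀ 𝒪

/-- A family `ℙ` of collections of subsets of `Z` is `κ`-singular at `z`. -/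
def KappaSingularAt {Z : Type u} [TopologicalSpace Z] (κ : Cardinal.{u})
    (ℙ : Set (Set (Set Z))) (z : Z) : Prop :=
  (∀ ξ ∈ ℙ, ∀ A ∈ ξ, Cardinal.mk A ≤ κ) ∧
  (∀ ξ ∈ ℙ, ∀ F : Finset (Set Z), ↑F ⊆ ξ → (⋂₀ (F : Set (Set Z))).Nonempty) ∧
  (∀ O : Set Z, IsOpen O → z ∈ O → ∃ ξ ∈ ℙ, ∃ A ∈ ξ, A ⊆ O) ∧
  (∀ ℰ ⊆ ℙ, Cardinal.mk ℰ ≤ κ → ∃ c : Set (Set Z) → Set Z,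
    (∀ ξ ∈ ℰ, c ξ ∈ ξ) ∧ z ∉ closure (⋃ ξ ∈ ℰ, c ξ))

/-- `X` is an Alster space. -/
def Alster (X : Type*) [TopologicalSpace X] : Prop :=
  ∀ 𝒢 : Set (Set X), (∀ G ∈ 𝒢, IsGDeltaSet G) → IsKCover 𝒢 →
    ∃ 𝒢' ⊆ 𝒢, 𝒢'.Countable ∧ ⋃₀ 𝒢' = Set.univ

/-- `X` is strongly Alster. -/
def StronglyAlster (X : Type*) [TopologicalSpace X] : Prop :=
  ∀ 𝒢 : Set (Set X), (∀ G ∈ 𝒢, IsGDeltaSet G) → IsKCover 𝒢 →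
    ∃ 𝒢' ⊆ 𝒢, 𝒢'.Countable ∧ IsKCover 𝒢'

/-- `X` is productively Lindelöf. -/
def ProductivelyLindelof (X : Type u) [TopologicalSpace X] : Prop :=
  ∀ (Y : Type u) [TopologicalSpace Y], LindelofSpace Y → LindelofSpace (X × Y)

/-- `X` is hemicompact. -/
def Hemicompact (X : Type*) [TopologicalSpace X] : Prop :=
  ∃ K : ℕ → Set X, (∀ n, IsCompact (K n)) ∧ ∀ C : Set X, IsCompact C → ∃ n, C ⊆ K n

/-!
If `X` is strongly Alster, `Y` is countably tight and `(f, y)` is in the closure of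
`A ⊆ C_k(X) × Y`, then for each compact `K` the tightness of `Y` gives countable sets
`B_{K,n} ⊆ A` whose members are `1 / (n + 1)`-close to `f` on `K` and whose second coordinates
accumulate at `y`. The points of `X` where all members of all `B_{K,n}` stay that close to `f` form
a `G_δ`-set containing `K`; countably many of these sets form a K-cover, and the union of the
corresponding `B_{K,n}` has `(f, y)` in its closure.

Conversely, given `G_δ`-sets `G_K = ⋂ₙ O_{K,n} ⊇ K` with `O_{K,n}` open and decreasing in `n`, let
`h_{K,n}` vanish on `K` and equal `1` off `O_{K,n}`. Pairing `h_{K,n}` with the `n`-th point of the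
`K`-th spine of a sequential fan gives a set with `(0, vertex)` in its closure, and the spines met
by a countable subset with the same property index a countable K-subcover: if `h_{K,n} < 1` on a
compact set `C`, then `C ⊆ O_{K,n}`, and for `n` large, depending on `K`, this forces `C ⊆ G_K`.
-/

open Filter TopologicalSpace

theorem exists_countable_subset_image_eq {α β : Type*} {φ : α → β} {A : Set α} {C : Set β}
    (hC : C.Countable) (hCA : C ⊆ φ '' A) : ∃ B ⊆ A, B.Countable ∧ φ '' B = C := by
  obtain ⟨B, hBA, hBC⟩ := SurjOn.exists_bijOn_subset hCA
  exact ⟨B, hBA, countable_of_injective_of_countable_image hBC.injOn (hBC.image_eq ▸ hC),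
    hBC.image_eq⟩

theorem eventually_subset_iInter_of_subset {ι α : Type*} [Preorder ι] {O : ι → Set α}
    (hO : Antitone O) (C : Set α) : ∀ᶠ i in atTop, C ⊆ O i → C ⊆ ⋂ i, O i := by
  by_cases hC : C ⊆ ⋂ i, O i
  · exact .of_forall fun _ _ ↦ hC
  · obtain ⟨j, hj⟩ := not_forall.1 (mt subset_iInter hC)
    filter_upwards [eventually_ge_atTop j] with i hji hCi
    exact (hj (hCi.trans (hO hji))).elim

section Topology

variable {Y Z : Type*} [TopologicalSpace Y] [TopologicalSpace Z]

theorem mem_closure_image_snd_of_mem_nhds {z : Z} {y : Y} {A : Set (Z × Y)} {U : Set Z}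
    (hA : (z, y) ∈ closure A) (hU : U ∈ 𝓝 z) :
    y ∈ closure (Prod.snd '' (A ∩ Prod.fst ⁻¹' U)) := by
  rw [mem_closure_iff_nhds] at hA ⊢
  intro V hV
  obtain ⟨p, ⟨hpU, hpV⟩, hpA⟩ := hA _ (prod_mem_nhds hU hV)
  exact ⟨p.2, hpV, p, ⟨hpA, hpU⟩, rfl⟩

theorem CountablyTight.exists_countable_subset_image {T : Type*} (hY : CountablyTight Y) {y : Y}
    {φ : T → Y} {A : Set T} (hy : y ∈ closure (φ '' A)) :
    ∃ B ⊆ A, B.Countable ∧ y ∈ closure (φ '' B) := by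
  obtain ⟨C, hCA, hC, hyC⟩ := hY y _ hy
  obtain ⟨B, hBA, hB, rfl⟩ := exists_countable_subset_image_eq hC hCA
  exact ⟨B, hBA, hB, hyC⟩

theorem exists_antitone_isOpen_iInter_eq {G : Set Y} (hG : IsGδ G) :
    ∃ O : ℕ → Set Y, Antitone O ∧ (∀ n, IsOpen (O n)) ∧ ⋂ n, O n = G := by
  obtain ⟨U, hU, rfl⟩ := hG.eq_iInter_nat
  refine ⟨dissipate U, antitone_dissipate, fun n ↦ ?_, iInter_dissipate⟩
  exact (finite_Iic n).isOpen_biInter fun i _ ↦ hU i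

theorem exists_continuous_zero_one_of_isCompact_of_isOpen [CompletelyRegularSpace Y] {K O : Set Y}
    (hK : IsCompact K) (hO : IsOpen O) (hKO : K ⊆ O) :
    ∃ h : C(Y, ℝ), EqOn h 0 K ∧ EqOn h 1 Oᶜ := by
  obtain ⟨V, hV, rfl⟩ := isInducing_stoneCechUnit.isOpen_iff.1 hO
  obtain ⟨h, h_zero, h_one, -⟩ := exists_continuous_zero_one_of_isCompact
    (hK.image continuous_stoneCechUnit) hV.isClosed_compl
    (disjoint_compl_right_iff_subset.2 (image_subset_iff.2 hKO))
  exact ⟨h.comp ⟨stoneCechUnit, continuous_stoneCechUnit⟩,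
    fun x hx ↦ h_zero (mem_image_of_mem _ hx), fun x hx ↦ h_one hx⟩

end Topology

section CompactOpen

variable {X E : Type*} [TopologicalSpace X] [PseudoMetricSpace E]

theorem mem_nhds_continuousMap_iff {f : C(X, E)} {U : Set C(X, E)} :
    U ∈ 𝓝 f ↔ ∃ K : Compacts X, ∃ n : ℕ, {g | ∀ x ∈ K, dist (f x) (g x) < 1 / (n + 1)} ⊆ U := by
  have h_basis := nhds_basis_uniformity' (x := f)
    Metric.uniformity_basis_dist_inv_nat_succ.compactConvergenceUniformity
  constructor
  · intro hU
    obtain ⟨⟨K, n⟩, ⟨hK, -⟩, hKU⟩ := h_basis.mem_iff.1 hU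
    exact ⟨⟨K, hK⟩, n, hKU⟩
  · rintro ⟨K, n, hKU⟩
    exact h_basis.mem_iff.2 ⟨(K, n), ⟨K.isCompact, trivial⟩, hKU⟩

theorem setOfPred_forall_dist_lt_mem_nhds (f : C(X, E)) (K : Compacts X) (n : ℕ) :
    {g : C(X, E) | ∀ x ∈ K, dist (f x) (g x) < 1 / (n + 1)} ∈ 𝓝 f :=
  mem_nhds_continuousMap_iff.2 ⟨K, n, Subset.rfl⟩

theorem isGδ_setOfPred_forall_dist_lt {ι : Type*} [Countable ι] (f : C(X, E))
    {S : ι → Set C(X, E)} (hS : ∀ i, (S i).Countable) (ε : ι → ℝ) :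
    IsGδ {x | ∀ i, ∀ g ∈ S i, dist (f x) (g x) < ε i} := by
  simp only [ofPred_forall]
  exact .iInter fun i ↦ .biInter (hS i) fun g _ ↦
    (isOpen_lt (f.continuous.dist g.continuous) continuous_const).isGδ

end CompactOpen

theorem stronglyAlster_iff_forall_compacts {X : Type*} [TopologicalSpace X] :
    StronglyAlster X ↔ ∀ G : Compacts X → Set X, (∀ K, IsGδ (G K)) → (∀ K, ↑K ⊆ G K) →
      ∃ D : Set (Compacts X), D.Countable ∧ ∀ C : Compacts X, ∃ K ∈ D, ↑C ⊆ G K := by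
  constructor
  · intro hX G hG hKG
    obtain ⟨𝒢, h𝒢G, h𝒢, hcov⟩ := hX (range G) (forall_mem_range.2 hG)
      fun K hK ↦ ⟨G ⟨K, hK⟩, mem_range_self _, hKG ⟨K, hK⟩⟩
    obtain ⟨D, -, hD, rfl⟩ := exists_countable_subset_image_eq h𝒢 (h𝒢G.trans image_univ.superset)
    exact ⟨D, hD, fun C ↦ exists_mem_image.1 (hcov C C.isCompact)⟩
  · intro hX 𝒢 h𝒢 hcov
    choose G hG hKG using fun K : Compacts X ↦ hcov K K.isCompact
    obtain ⟨D, hD, hDG⟩ := hX G (fun K ↦ h𝒢 _ (hG K)) hKG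
    exact ⟨G '' D, image_subset_iff.2 fun K _ ↦ hG K, hD.image G,
      fun C hC ↦ exists_mem_image.2 (hDG ⟨C, hC⟩)⟩

theorem StronglyAlster.productivelyCountablyTight {X E : Type*} [TopologicalSpace X]
    [PseudoMetricSpace E] (hX : StronglyAlster X) : ProductivelyCountablyTight C(X, E) := by
  rintro Y _ hY ⟨f, y⟩ A hA
  have h_approx (K : Compacts X) (n : ℕ) :
      ∃ B ⊆ A ∩ Prod.fst ⁻¹' {g | ∀ x ∈ K, dist (f x) (g x) < 1 / (n + 1)},
        B.Countable ∧ y ∈ closure (Prod.snd '' B) :=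
    hY.exists_countable_subset_image <|
      mem_closure_image_snd_of_mem_nhds hA (setOfPred_forall_dist_lt_mem_nhds f K n)
  choose B hBA hB hyB using h_approx
  obtain ⟨D, hD, hDcov⟩ := stronglyAlster_iff_forall_compacts.1 hX
    (fun K ↦ {x | ∀ n : ℕ, ∀ g ∈ Prod.fst '' B K n, dist (f x) (g x) < 1 / (n + 1)})
    (fun K ↦ isGδ_setOfPred_forall_dist_lt f (fun n ↦ (hB K n).image _) _)
    (fun K x hx n ↦ forall_mem_image.2 fun p hp ↦ (hBA K n hp).2 x hx)
  refine ⟨⋃ K ∈ D, ⋃ n, B K n, ?_, hD.biUnion fun K _ ↦ countable_iUnion (hB K), ?_⟩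
  · exact iUnion₂_subset fun K _ ↦ iUnion_subset fun n ↦ (hBA K n).trans inter_subset_left
  · rw [mem_closure_iff_nhds]
    intro W hW
    obtain ⟨U, hU, V, hV, hUV⟩ := mem_nhds_prod_iff.1 hW
    obtain ⟨C, n, hCU⟩ := mem_nhds_continuousMap_iff.1 hU
    obtain ⟨K, hKD, hCK⟩ := hDcov C
    obtain ⟨_, hpV, p, hp, rfl⟩ := mem_closure_iff_nhds.1 (hyB K n) V hV
    have hpU : p.1 ∈ U := hCU fun x hx ↦ hCK hx n p.1 (mem_image_of_mem _ hp)
    exact ⟨p, hUV ⟨hpU, hpV⟩, mem_biUnion hKD (mem_iUnion_of_mem n hp)⟩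

theorem countablyTight_nhdsAdjoint {ι Y : Type*} (a : Y) {l : ι → Filter Y}
    (hl : ∀ i, ∃ S ∈ l i, S.Countable) : @CountablyTight Y (nhdsAdjoint a (⨆ i, l i)) := by
  let := nhdsAdjoint a (⨆ i, l i)
  intro z A hz
  by_cases hzA : z ∈ A
  · exact ⟨{z}, singleton_subset_iff.2 hzA, countable_singleton z, subset_closure rfl⟩
  rw [mem_closure_iff_frequently] at hz
  obtain rfl : z = a := by
    by_contra hza
    rw [nhds_nhdsAdjoint_of_ne _ hza, frequently_pure] at hz
    exact hzA hz
  rw [nhds_nhdsAdjoint_same, frequently_sup, frequently_pure, frequently_iSup] at hz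
  obtain ⟨i, hi⟩ := hz.resolve_left hzA
  obtain ⟨S, hS, hSc⟩ := hl i
  refine ⟨A ∩ S, inter_subset_left, hSc.mono inter_subset_right, ?_⟩
  rw [mem_closure_iff_frequently, nhds_nhdsAdjoint_same, frequently_sup, frequently_iSup]
  exact Or.inr ⟨i, hi.and_eventually hS⟩

/-- The sequential fan with spines indexed by `I`: the quotient of `I` many convergent sequences
identifying their limits with a single vertex. -/
inductive SequentialFan (I : Type*)
  | vertex : SequentialFan I
  | point : I → ℕ → SequentialFan I

namespace SequentialFan

variable {I : Type*}

instance : TopologicalSpace (SequentialFan I) :=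
  nhdsAdjoint vertex (⨆ i, map (point i) atTop)

theorem mem_nhds_vertex {V : Set (SequentialFan I)} :
    V ∈ 𝓝 vertex ↔ vertex ∈ V ∧ ∀ i, ∀ᶠ n in atTop, point i n ∈ V := by
  rw [nhds_nhdsAdjoint_same, mem_sup, mem_pure, mem_iSup]
  rfl

theorem countablyTight (I : Type*) : CountablyTight (SequentialFan I) :=
  countablyTight_nhdsAdjoint vertex fun i ↦ ⟨range (point i), range_mem_map, countable_range _⟩

end SequentialFan

/-- The relations `P` encode the neighbourhoods of the vertex of a sequential fan. -/
theorem ProductivelyCountablyTight.exists_countable_spines {Z I : Type u} [TopologicalSpace Z]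
    (hZ : ProductivelyCountablyTight Z) {z : Z} {f : I → ℕ → Z}
    (hf : ∀ U ∈ 𝓝 z, ∃ i, ∃ᶠ n in atTop, f i n ∈ U) :
    ∃ D : Set I, D.Countable ∧ ∀ U ∈ 𝓝 z, ∀ P : I → ℕ → Prop, (∀ i, ∀ᶠ n in atTop, P i n) →
      ∃ i ∈ D, ∃ n, f i n ∈ U ∧ P i n := by
  let e : I × ℕ → Z × SequentialFan I := fun p ↦ (f p.1 p.2, .point p.1 p.2)
  have he : Function.Injective e := by
    rintro ⟨i, n⟩ ⟨j, m⟩ h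
    simpa [e] using congr_arg Prod.snd h
  have h_mem : (z, .vertex) ∈ closure (range e) := by
    rw [mem_closure_iff_nhds]
    intro W hW
    obtain ⟨U, hU, V, hV, hUV⟩ := mem_nhds_prod_iff.1 hW
    obtain ⟨i, hi⟩ := hf U hU
    obtain ⟨n, hnU, hnV⟩ := (hi.and_eventually ((SequentialFan.mem_nhds_vertex.1 hV).2 i)).exists
    exact ⟨e (i, n), hUV ⟨hnU, hnV⟩, mem_range_self _⟩
  obtain ⟨B, hBe, hB, hzB⟩ := hZ _ (SequentialFan.countablyTight I) _ _ h_mem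
  refine ⟨Prod.fst '' (e ⁻¹' B), (hB.preimage he).image _, fun U hU P hP ↦ ?_⟩
  let V : Set (SequentialFan I) := {q | ∀ i n, q = .point i n → P i n}
  have hV : V ∈ 𝓝 .vertex := by
    refine SequentialFan.mem_nhds_vertex.2 ⟨nofun, fun i ↦ (hP i).mono ?_⟩
    rintro n hn _ _ ⟨⟩
    exact hn
  obtain ⟨_, ⟨hbU, hbV⟩, hbB⟩ := mem_closure_iff_nhds.1 hzB _ (prod_mem_nhds hU hV)
  obtain ⟨⟨i, n⟩, rfl⟩ := hBe hbB
  exact ⟨i, ⟨(i, n), hbB, rfl⟩, n, hbU, hbV i n rfl⟩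

theorem ProductivelyCountablyTight.stronglyAlster {X : Type u} [TopologicalSpace X]
    [CompletelyRegularSpace X] (hX : ProductivelyCountablyTight C(X, ℝ)) : StronglyAlster X := by
  refine stronglyAlster_iff_forall_compacts.2 fun G hG hKG ↦ ?_
  choose O hO_anti hO_open hOG using fun K ↦ exists_antitone_isOpen_iInter_eq (hG K)
  have hKO (K : Compacts X) (n : ℕ) : ↑K ⊆ O K n := subset_iInter_iff.1 ((hOG K).symm ▸ hKG K) n
  choose h h_zero h_one using fun (K : Compacts X) (n : ℕ) ↦
    exists_continuous_zero_one_of_isCompact_of_isOpen K.isCompact (hO_open K n) (hKO K n)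
  have h_near (U : Set C(X, ℝ)) (hU : U ∈ 𝓝 0) : ∃ K, ∃ᶠ n in atTop, h K n ∈ U := by
    obtain ⟨K, m, hKU⟩ := mem_nhds_continuousMap_iff.1 hU
    refine ⟨K, .of_forall fun n ↦ hKU fun x hx ↦ ?_⟩
    rw [h_zero K n hx]
    simpa using Nat.cast_add_one_pos m
  obtain ⟨D, hD, hDh⟩ := hX.exists_countable_spines h_near
  refine ⟨D, hD, fun C ↦ ?_⟩
  obtain ⟨K, hKD, n, h_small, hCO⟩ := hDh _ (setOfPred_forall_dist_lt_mem_nhds 0 C 0)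
    (fun K n ↦ ↑C ⊆ O K n → ↑C ⊆ ⋂ n, O K n)
    fun K ↦ eventually_subset_iInter_of_subset (hO_anti K) C
  refine ⟨K, hKD, hOG K ▸ hCO fun x hxC ↦ ?_⟩
  by_contra hxO
  simpa [h_one K n hxO] using h_small x hxC

theorem stmt9_general {X : Type u} [TopologicalSpace X] [CompletelyRegularSpace X] :
    ProductivelyCountablyTight C(X, ℝ) ↔ StronglyAlster X :=
  ⟨ProductivelyCountablyTight.stronglyAlster, StronglyAlster.productivelyCountablyTight⟩

/-- `C_k(X)` is productively countably tight iff `X` is strongly Alster. -/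
theorem stmt9 {X : Type u} [TopologicalSpace X] [T35Space X] :
    ProductivelyCountablyTight C(X, ℝ) ↔ StronglyAlster X := by
  exact stmt9_general
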